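/- Let β ≥ γ ≥ 0 be real numbers with β + γ > 1, and let ε > 0. Define α = γ if β > 1, α = γ − ε if β = 1, and α = β + γ − 1 if β < 1. Then there exists a constant C = C(β, γ, ε) > 0 such that for all k₁, k₂ ∈ ℤ, ∑_{n ∈ ℤ} ⟨n − k₁⟩^{−β} ⟨n − k₂⟩^{−γ} ≤ C ⟨k₁ − k₂⟩^{−α}. -/

import Mathlib

open MeasureTheory Real

/-- The Japanese bracket `⟨x⟩ = (1 + x²)^{1/2}`. -/
noncomputable def jpn (x : ℝ) : ℝ := Real.sqrt (1 + x ^ 2)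

lemma cb_step1 {p x : ℝ} (hp : 0 < p) (hp1 : p < 1) (hx : 1 ≤ x) :
    p * x ^ (p - 1) ≤ x ^ p - (x - 1) ^ p := by
  have hx0 : 0 < x := by linarith
  have hinv : x⁻¹ ≤ 1 := inv_le_one_of_one_le₀ hx
  have h := rpow_one_add_le_one_add_mul_self (s := -x⁻¹) (by linarith) hp.le hp1.le
  have e : x - 1 = x * (1 + -x⁻¹) := by field_simp; ring
  rw [e, Real.mul_rpow hx0.le (by linarith), Real.rpow_sub hx0, Real.rpow_one]
  have := mul_le_mul_of_nonneg_left h (Real.rpow_nonneg hx0.le p)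
  have e2 : p * (x ^ p / x) = x ^ p - x ^ p * (1 + p * -x⁻¹) := by field_simp; ring
  linarith

lemma cb_step2 {p x : ℝ} (hp : 0 < p) (hx : 1 < x) :
    p * x ^ (-p - 1) ≤ (x - 1) ^ (-p) - x ^ (-p) := by
  have hx0 : 0 < x := by linarith
  have hinv : x⁻¹ < 1 := inv_lt_one_of_one_lt₀ hx
  have h : 1 + p * x⁻¹ ≤ (1 + -x⁻¹) ^ (-p) := by
    rw [Real.rpow_def_of_pos (by linarith)]
    have h1 := Real.add_one_le_exp (Real.log (1 + -x⁻¹) * -p)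
    have h2 := Real.log_le_sub_one_of_pos (show 0 < 1 + -x⁻¹ by linarith)
    nlinarith
  have e : x - 1 = x * (1 + -x⁻¹) := by field_simp; ring
  rw [e, Real.mul_rpow hx0.le (by linarith), Real.rpow_sub hx0, Real.rpow_one]
  have := mul_le_mul_of_nonneg_left h (Real.rpow_nonneg hx0.le (-p))
  have e2 : p * (x ^ (-p) / x) = x ^ (-p) * (1 + p * x⁻¹) - x ^ (-p) := by field_simp; ring
  linarith

lemma cb_sum1 {β : ℝ} (hβ : 0 < β) (hβ1 : β < 1) (N : ℕ) :
    ∑ j ∈ Finset.range N, ((j : ℝ) + 1) ^ (-β) ≤ (N : ℝ) ^ (1 - β) / (1 - β) := by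
  have hp : 0 < 1 - β := by linarith
  rw [le_div_iff₀ hp]
  induction N with
  | zero => simp [Real.zero_rpow hp.ne']
  | succ n ih =>
    rw [Finset.sum_range_succ, add_mul]
    have h := cb_step1 (x := (n : ℝ) + 1) hp (by linarith) (by linarith [n.cast_nonneg (α := ℝ)])
    have e : (1 - β - 1 : ℝ) = -β := by ring
    rw [e, add_sub_cancel_right] at h
    push_cast
    linarith

lemma cb_sum2 {s : ℝ} (hs : 1 < s) (N : ℕ) (hN : 1 ≤ N) (M : ℕ) :
    ∑ j ∈ Finset.range M, (((j + N : ℕ) : ℝ) + 1) ^ (-s) ≤ (N : ℝ) ^ (1 - s) / (s - 1) := by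
  have hp : 0 < s - 1 := by linarith
  have hN' : (1 : ℝ) ≤ N := by exact_mod_cast hN
  have key : (∑ j ∈ Finset.range M, (((j + N : ℕ) : ℝ) + 1) ^ (-s)) * (s - 1) ≤
      (N : ℝ) ^ (1 - s) - ((M + N : ℕ) : ℝ) ^ (1 - s) := by
    induction M with
    | zero => simp
    | succ n ih =>
      rw [Finset.sum_range_succ, add_mul]
      have h := cb_step2 (x := ((n + N : ℕ) : ℝ) + 1) hp
        (by push_cast; linarith [n.cast_nonneg (α := ℝ)])
      have e : (-(s - 1) - 1 : ℝ) = -s := by ring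
      have e' : (-(s - 1) : ℝ) = 1 - s := by ring
      rw [e, e', add_sub_cancel_right] at h
      have e3 : ((n + 1 + N : ℕ) : ℝ) = ((n + N : ℕ) : ℝ) + 1 := by push_cast; ring
      rw [e3]
      linarith
  rw [le_div_iff₀ hp]
  have : 0 ≤ ((M + N : ℕ) : ℝ) ^ (1 - s) := by positivity
  linarith

/-- Transfer of a radial majorant from `ℕ` to `ℤ`. -/
lemma cb_int {g : ℕ → ℝ} (hg : Summable g) (k : ℤ) :
    Summable (fun n : ℤ => g (n - k).natAbs) := by
  have h0 : Summable (fun n : ℤ => g n.natAbs) := by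
    refine Summable.of_nat_of_neg (f := fun n : ℤ => g n.natAbs) ?_ ?_
    · simpa only [Int.natAbs_natCast] using hg
    · simpa only [Int.natAbs_neg, Int.natAbs_natCast] using hg
  have h1 := h0.comp_injective (Equiv.subRight k).injective
  simpa only [Function.comp_def, Equiv.subRight_apply] using h1

lemma cb_int_le {g : ℕ → ℝ} (hg : Summable g) (h0 : ∀ n, 0 ≤ g n) (k : ℤ) :
    ∑' n : ℤ, g (n - k).natAbs ≤ 2 * ∑' n, g n := by
  have e : ∑' n : ℤ, g (n - k).natAbs = ∑' n : ℤ, g n.natAbs :=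
    (Equiv.subRight k).tsum_eq (fun n : ℤ => g n.natAbs)
  rw [e, Summable.tsum_of_nat_of_neg (f := fun n : ℤ => g n.natAbs)
    (by simpa using hg) (by simpa using hg)]
  simp only [Int.natAbs_natCast, Int.natAbs_neg, Int.natAbs_zero]
  linarith [h0 0]

lemma cb_jpn_lower (x : ℝ) : (1 + |x|) / 2 ≤ jpn x := by
  unfold jpn
  apply Real.le_sqrt_of_sq_le
  nlinarith [sq_abs x, abs_nonneg x, sq_nonneg (|x| - 1)]

lemma cb_jpn_upper (x : ℝ) : jpn x ≤ 1 + |x| := by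
  unfold jpn
  rw [Real.sqrt_le_left (by positivity)]
  nlinarith [sq_abs x, abs_nonneg x]

lemma cb_jpn_one (x : ℝ) : 1 ≤ jpn x := by
  unfold jpn
  rw [Real.one_le_sqrt]
  nlinarith [sq_nonneg x]

lemma cb_half {x y p : ℝ} (hx : 0 < x) (hxy : x / 2 ≤ y) (hp : 0 ≤ p) :
    y ^ (-p) ≤ 2 ^ p * x ^ (-p) := by
  calc y ^ (-p) ≤ (x / 2) ^ (-p) :=
        Real.rpow_le_rpow_of_nonpos (by positivity) hxy (by linarith)
    _ = 2 ^ p * x ^ (-p) := by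
        rw [Real.div_rpow hx.le (by norm_num), Real.rpow_neg (by norm_num : (0:ℝ) ≤ 2)]
        field_simp

lemma cb_swap {x y β γ : ℝ} (hx : 0 < x) (hxy : x ≤ y) (h : γ ≤ β) :
    y ^ (-β) * x ^ (-γ) ≤ x ^ (-β) * y ^ (-γ) := by
  have hy : 0 < y := by linarith
  have e1 : y ^ (-β) = y ^ (-(β - γ)) * y ^ (-γ) := by
    rw [← Real.rpow_add hy]; congr 1; ring
  have e2 : x ^ (-β) = x ^ (-(β - γ)) * x ^ (-γ) := by
    rw [← Real.rpow_add hx]; congr 1; ring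
  have h1 : y ^ (-(β - γ)) ≤ x ^ (-(β - γ)) :=
    Real.rpow_le_rpow_of_nonpos hx hxy (by linarith)
  rw [e1, e2]
  have : 0 ≤ y ^ (-γ) * x ^ (-γ) := by positivity
  nlinarith [mul_le_mul_of_nonneg_right h1 this]

lemma cb_core (β γ α B : ℝ) (hγ : 0 ≤ γ) (hβγ : γ ≤ β) (hα : 0 ≤ α) (hB : 0 < B)
    (H : ∀ N : ℕ, 1 ≤ N → ∃ g : ℕ → ℝ, (∀ n, 0 ≤ g n) ∧ Summable g ∧
      ∑' n, g n ≤ B * (N : ℝ) ^ (-α) ∧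
      ∀ a b : ℕ, a ≤ b → N ≤ a + b + 1 →
        ((a : ℝ) + 1) ^ (-β) * ((b : ℝ) + 1) ^ (-γ) ≤ g a) :
    ∃ C : ℝ, 0 < C ∧ ∀ k₁ k₂ : ℤ,
      (∑' n : ℤ, jpn ((n : ℝ) - k₁) ^ (-β) * jpn ((n : ℝ) - k₂) ^ (-γ))
        ≤ C * jpn ((k₁ : ℝ) - k₂) ^ (-α) := by
  refine ⟨2 ^ β * 2 ^ γ * (4 * B), by positivity, fun k₁ k₂ => ?_⟩
  obtain ⟨g, g0, gs, gB, hg⟩ := H ((k₁ - k₂).natAbs + 1) (by omega)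
  have hcast : ∀ a b : ℤ, |(a : ℝ) - b| = ((a - b).natAbs : ℝ) := by
    intro a b
    rw [Nat.cast_natAbs]; push_cast; rfl
  have hjp : ∀ x, 0 < jpn x := fun x => lt_of_lt_of_le one_pos (cb_jpn_one x)
  have hpt : ∀ n : ℤ, jpn ((n : ℝ) - k₁) ^ (-β) * jpn ((n : ℝ) - k₂) ^ (-γ) ≤
      2 ^ β * 2 ^ γ * (g (n - k₁).natAbs + g (n - k₂).natAbs) := by
    intro n
    have h1 := cb_half (by positivity) (cb_jpn_lower ((n : ℝ) - k₁)) (hγ.trans hβγ)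
    have h2 := cb_half (by positivity) (cb_jpn_lower ((n : ℝ) - k₂)) hγ
    rw [hcast, add_comm (1 : ℝ)] at h1 h2
    have h3 := mul_le_mul h1 h2 (Real.rpow_nonneg (hjp _).le _) (by positivity)
    have h4 : (((n - k₁).natAbs : ℝ) + 1) ^ (-β) * (((n - k₂).natAbs : ℝ) + 1) ^ (-γ) ≤
        g (n - k₁).natAbs + g (n - k₂).natAbs := by
      rcases le_total (n - k₁).natAbs (n - k₂).natAbs with h | h
      · linarith [hg _ _ h (by omega), g0 (n - k₂).natAbs]
      · have h' : (((n - k₂).natAbs : ℝ)) ≤ (n - k₁).natAbs := by exact_mod_cast h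
        linarith [hg _ _ h (by omega), g0 (n - k₁).natAbs,
          cb_swap (x := ((n - k₂).natAbs : ℝ) + 1) (y := ((n - k₁).natAbs : ℝ) + 1)
            (by positivity) (by linarith) hβγ]
    have h5 := mul_le_mul_of_nonneg_left h4 (show (0:ℝ) ≤ 2 ^ β * 2 ^ γ by positivity)
    linarith
  have hsR : Summable fun n : ℤ =>
      2 ^ β * 2 ^ γ * (g (n - k₁).natAbs + g (n - k₂).natAbs) :=
    ((cb_int gs k₁).add (cb_int gs k₂)).mul_left _
  have hsL : Summable fun n : ℤ =>
      jpn ((n : ℝ) - k₁) ^ (-β) * jpn ((n : ℝ) - k₂) ^ (-γ) :=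
    Summable.of_nonneg_of_le
      (fun n => mul_nonneg (Real.rpow_nonneg (hjp _).le _) (Real.rpow_nonneg (hjp _).le _))
      hpt hsR
  have hK : ((((k₁ - k₂).natAbs + 1 : ℕ)) : ℝ) ^ (-α) ≤ jpn ((k₁ : ℝ) - k₂) ^ (-α) := by
    apply Real.rpow_le_rpow_of_nonpos (hjp _) _ (by linarith)
    have := cb_jpn_upper ((k₁ : ℝ) - k₂)
    rw [hcast] at this
    push_cast; push_cast at this; linarith
  calc _ ≤ ∑' n : ℤ, 2 ^ β * 2 ^ γ * (g (n - k₁).natAbs + g (n - k₂).natAbs) :=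
        hsL.tsum_le_tsum hpt hsR
    _ = 2 ^ β * 2 ^ γ * (∑' n : ℤ, g (n - k₁).natAbs + ∑' n : ℤ, g (n - k₂).natAbs) := by
        rw [tsum_mul_left, (cb_int gs k₁).tsum_add (cb_int gs k₂)]
    _ ≤ 2 ^ β * 2 ^ γ * (4 * (B * jpn ((k₁ : ℝ) - k₂) ^ (-α))) := by
        apply mul_le_mul_of_nonneg_left _ (by positivity)
        have := mul_le_mul_of_nonneg_left hK hB.le
        linarith [cb_int_le gs g0 k₁, cb_int_le gs g0 k₂]
    _ = _ := by ring

lemma cb_caseI (β γ α : ℝ) (hγ : 0 ≤ γ) (hβγ : γ ≤ β) (hα : 0 ≤ α) (hαγ : α ≤ γ)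
    (hs : 1 < β + γ - α) :
    ∃ C : ℝ, 0 < C ∧ ∀ k₁ k₂ : ℤ,
      (∑' n : ℤ, jpn ((n : ℝ) - k₁) ^ (-β) * jpn ((n : ℝ) - k₂) ^ (-γ))
        ≤ C * jpn ((k₁ : ℝ) - k₂) ^ (-α) := by
  have hS : Summable fun n : ℕ => ((n : ℝ) + 1) ^ (-(β + γ - α)) := by
    have := (summable_nat_add_iff 1).mpr
      (Real.summable_nat_rpow (p := -(β + γ - α)).mpr (by linarith))
    simpa using this
  have hS0 : 0 ≤ ∑' n : ℕ, ((n : ℝ) + 1) ^ (-(β + γ - α)) :=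
    tsum_nonneg fun n => by positivity
  refine cb_core β γ α (2 ^ α * (∑' n : ℕ, ((n : ℝ) + 1) ^ (-(β + γ - α)) + 1))
    hγ hβγ hα (by positivity) fun N hN => ?_
  have hN' : (1 : ℝ) ≤ N := by exact_mod_cast hN
  refine ⟨fun n => 2 ^ α * (N : ℝ) ^ (-α) * ((n : ℝ) + 1) ^ (-(β + γ - α)),
    fun n => by positivity, hS.mul_left _, ?_, ?_⟩
  · rw [tsum_mul_left]
    have : 0 ≤ (2 : ℝ) ^ α * (N : ℝ) ^ (-α) := by positivity
    nlinarith
  · intro a b hab hNab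
    have hab' : (a : ℝ) ≤ b := by exact_mod_cast hab
    have hN2 : (N : ℝ) ≤ a + b + 1 := by exact_mod_cast hNab
    have ha : 0 < (a : ℝ) + 1 := by positivity
    have hb : 0 < (b : ℝ) + 1 := by positivity
    have e1 : ((b : ℝ) + 1) ^ (-γ) = ((b : ℝ) + 1) ^ (-α) * ((b : ℝ) + 1) ^ (-(γ - α)) := by
      rw [← Real.rpow_add hb]; congr 1; ring
    have e2 : ((a : ℝ) + 1) ^ (-(β + γ - α)) =
        ((a : ℝ) + 1) ^ (-β) * ((a : ℝ) + 1) ^ (-(γ - α)) := by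
      rw [← Real.rpow_add ha]; congr 1; ring
    have h1 : ((b : ℝ) + 1) ^ (-α) ≤ 2 ^ α * (N : ℝ) ^ (-α) :=
      cb_half (by linarith) (by linarith) hα
    have h2 : ((b : ℝ) + 1) ^ (-(γ - α)) ≤ ((a : ℝ) + 1) ^ (-(γ - α)) :=
      Real.rpow_le_rpow_of_nonpos ha (by linarith) (by linarith)
    have h3 := mul_le_mul h1 h2 (by positivity) (by positivity)
    have h4 := mul_le_mul_of_nonneg_left h3 (show 0 ≤ ((a : ℝ) + 1) ^ (-β) by positivity)
    simp only [e1, e2]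
    linarith

lemma cb_caseII (β γ : ℝ) (hγ : 0 ≤ γ) (hβγ : γ ≤ β) (hβ1 : β < 1) (hs : 1 < β + γ) :
    ∃ C : ℝ, 0 < C ∧ ∀ k₁ k₂ : ℤ,
      (∑' n : ℤ, jpn ((n : ℝ) - k₁) ^ (-β) * jpn ((n : ℝ) - k₂) ^ (-γ))
        ≤ C * jpn ((k₁ : ℝ) - k₂) ^ (-(β + γ - 1)) := by
  have hp : 0 < 1 - β := by linarith
  have hq : 0 < β + γ - 1 := by linarith
  refine cb_core β γ (β + γ - 1) (2 ^ γ / (1 - β) + 1 / (β + γ - 1))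
    hγ hβγ hq.le (by positivity) fun N hN => ?_
  have hN' : (1 : ℝ) ≤ N := by exact_mod_cast hN
  have hN0 : (0 : ℝ) < N := by linarith
  set g : ℕ → ℝ := fun n => if n < N then 2 ^ γ * (N : ℝ) ^ (-γ) * ((n : ℝ) + 1) ^ (-β)
    else ((n : ℝ) + 1) ^ (-(β + γ)) with hgdef
  have g0 : ∀ n, 0 ≤ g n := by
    intro n
    simp only [hgdef]
    split_ifs <;> positivity
  have hshift : ∀ n, g (n + N) = (((n + N : ℕ) : ℝ) + 1) ^ (-(β + γ)) := by
    intro n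
    simp only [hgdef]
    rw [if_neg (by omega)]
  have hs2 : ∀ M, ∑ j ∈ Finset.range M, g (j + N) ≤ (N : ℝ) ^ (1 - (β + γ)) / (β + γ - 1) := by
    intro M
    simp only [hshift]
    exact cb_sum2 hs N hN M
  have gs : Summable g :=
    (summable_nat_add_iff N).mp (summable_of_sum_range_le (fun n => g0 _) hs2)
  refine ⟨g, g0, gs, ?_, ?_⟩
  · rw [← gs.sum_add_tsum_nat_add N]
    have h1 := Real.tsum_le_of_sum_range_le (fun n => g0 (n + N)) hs2
    have h2 : ∑ j ∈ Finset.range N, g j ≤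
        2 ^ γ * (N : ℝ) ^ (-γ) * ((N : ℝ) ^ (1 - β) / (1 - β)) := by
      have : ∑ j ∈ Finset.range N, g j =
          2 ^ γ * (N : ℝ) ^ (-γ) * ∑ j ∈ Finset.range N, ((j : ℝ) + 1) ^ (-β) := by
        rw [Finset.mul_sum]
        apply Finset.sum_congr rfl
        intro j hj
        simp only [hgdef]
        rw [if_pos (Finset.mem_range.mp hj)]
      rw [this]
      exact mul_le_mul_of_nonneg_left (cb_sum1 (by linarith) hβ1 N) (by positivity)
    have e1 : (N : ℝ) ^ (-(β + γ - 1)) = (N : ℝ) ^ (-γ) * (N : ℝ) ^ (1 - β) := by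
      rw [← Real.rpow_add hN0]; congr 1; ring
    have e2 : (N : ℝ) ^ (1 - (β + γ)) = (N : ℝ) ^ (-(β + γ - 1)) := by congr 1; ring
    rw [e2] at h1
    calc _ ≤ 2 ^ γ * (N : ℝ) ^ (-γ) * ((N : ℝ) ^ (1 - β) / (1 - β)) +
          (N : ℝ) ^ (-(β + γ - 1)) / (β + γ - 1) := add_le_add h2 h1
      _ = _ := by rw [e1]; ring
  · intro a b hab hNab
    have hab' : (a : ℝ) ≤ b := by exact_mod_cast hab
    have hN2 : (N : ℝ) ≤ a + b + 1 := by exact_mod_cast hNab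
    have ha : 0 < (a : ℝ) + 1 := by positivity
    have ha0 : 0 ≤ ((a : ℝ) + 1) ^ (-β) := by positivity
    simp only [hgdef]
    split_ifs with h
    · have h1 : ((b : ℝ) + 1) ^ (-γ) ≤ 2 ^ γ * (N : ℝ) ^ (-γ) :=
        cb_half (by linarith) (by linarith) hγ
      linarith [mul_le_mul_of_nonneg_left h1 ha0]
    · have h2 : ((b : ℝ) + 1) ^ (-γ) ≤ ((a : ℝ) + 1) ^ (-γ) :=
        Real.rpow_le_rpow_of_nonpos ha (by linarith) (by linarith)
      have e : ((a : ℝ) + 1) ^ (-(β + γ)) = ((a : ℝ) + 1) ^ (-β) * ((a : ℝ) + 1) ^ (-γ) := by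
        rw [← Real.rpow_add ha]; congr 1; ring
      rw [e]
      exact mul_le_mul_of_nonneg_left h2 ha0

/-- Convolution-type estimate for Japanese bracket weights (sum over `ℤ`). -/
theorem convolution_bracket_sum (β γ ε : ℝ) (hγ : 0 ≤ γ) (hβγ : γ ≤ β)
    (hsum : 1 < β + γ) (hε : 0 < ε) :
    ∃ C : ℝ, 0 < C ∧ ∀ k₁ k₂ : ℤ,
      (∑' n : ℤ, jpn ((n : ℝ) - k₁) ^ (-β) * jpn ((n : ℝ) - k₂) ^ (-γ))
        ≤ C * jpn ((k₁ : ℝ) - k₂) ^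
            (-(if 1 < β then γ else if β = 1 then γ - ε else β + γ - 1)) := by
  split_ifs with h1 h2
  · exact cb_caseI β γ γ hγ hβγ hγ le_rfl (by linarith)
  · subst h2
    obtain ⟨C, hC, h⟩ := cb_caseI 1 γ (max (γ - ε) 0) hγ hβγ (le_max_right _ _)
      (max_le (by linarith) hγ) (by
        rcases max_cases (γ - ε) 0 with ⟨e, _⟩ | ⟨e, _⟩ <;> rw [e] <;> linarith)
    refine ⟨C, hC, fun k₁ k₂ => (h k₁ k₂).trans ?_⟩
    apply mul_le_mul_of_nonneg_left _ hC.le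
    exact Real.rpow_le_rpow_of_exponent_le (cb_jpn_one _) (neg_le_neg (le_max_left _ _))
  · exact cb_caseII β γ hγ hβγ (lt_of_le_of_ne (not_lt.mp h1) h2) hsum
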